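/- Suppose n = m. For any two-sided strategy-proof randomized matching mechanism f, there exists a randomized matching mechanism g that is two-sided strategy-proof and symmetric and satisfies max_{≻∈P} V(g(≻),≻) ≤ max_{≻∈P} V(f(≻),≻), where V(r,≻) denotes the stability violation of r at profile ≻. -/

import Mathlib

/-!
Given `f`, let `f'` be the mechanism obtained by exchanging the two sides of the market, running
`f`, and transposing the result. The witness is the average `g = (f + f') / 2`, which is
symmetric because role-swapping is an involution.

Feasibility and strategy-proofness are linear inequalities that `f'` inherits from `f` with the
two sides exchanged (`isRandMatching_swapMech`, `twoSidedSP_swapMech`), so they pass to the average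
(`isRandMatching_average`, `twoSidedSP_average`). The stability violation is a sum of positive
parts of affine functions, hence convex in the matching (`violation_average_le`), and transposing
a matching while swapping the profile preserves it (`violation_swapProfile`). Consequently
`violation p (g p)` is at most the average of the violations of `f` at `p` and at the swapped
profile, each of which is at most the maximum over the finitely many profiles.
-/

open Finset

/-- A preference profile: each student `s` has a ranking `p.1 s : Equiv.Perm (Fin m)`
(where `p.1 s c` is the rank student `s` gives to school `c`, lower rank = more preferred),
and each school `c` has a ranking `p.2 c` of the students (lower rank = more preferred). -/
abbrev Profile (n m : ℕ) :=
  (Fin n → Equiv.Perm (Fin m)) × (Fin m → Equiv.Perm (Fin n))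

/-- A randomized matching: nonnegative entries, and (accounting for the implicit `∅`
row/column each summing to one) every row and column sums to at most one. -/
def IsRandMatching {n m : ℕ} (r : Fin n → Fin m → ℝ) : Prop :=
  (∀ s c, 0 ≤ r s c) ∧ (∀ s, ∑ c, r s c ≤ 1) ∧ (∀ c, ∑ s, r s c ≤ 1)

/-- Stability violation of a randomized matching `r` at profile `p`. -/
def violation {n m : ℕ} (p : Profile n m) (r : Fin n → Fin m → ℝ) : ℝ :=
  ∑ s, ∑ c,
    max (1 - r s c
      - ∑ c' ∈ univ.filter (fun c' => p.1 s c' < p.1 s c), r s c'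
      - ∑ s' ∈ univ.filter (fun s' => p.2 c s' < p.2 c s), r s' c) 0

/-- Two-sided strategy-proofness of a randomized matching mechanism. -/
def TwoSidedSP {n m : ℕ} (g : Profile n m → Fin n → Fin m → ℝ) : Prop :=
  (∀ p : Profile n m, ∀ s : Fin n, ∀ q : Equiv.Perm (Fin m), ∀ c : Fin m,
    ∑ c' ∈ univ.filter (fun c' => p.1 s c' ≤ p.1 s c),
        g (Function.update p.1 s q, p.2) s c'
      ≤ ∑ c' ∈ univ.filter (fun c' => p.1 s c' ≤ p.1 s c), g p s c') ∧
  (∀ p : Profile n m, ∀ c : Fin m, ∀ q : Equiv.Perm (Fin n), ∀ s : Fin n,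
    ∑ s' ∈ univ.filter (fun s' => p.2 c s' ≤ p.2 c s),
        g (p.1, Function.update p.2 c q) s' c
      ≤ ∑ s' ∈ univ.filter (fun s' => p.2 c s' ≤ p.2 c s), g p s' c)

/-- The relabelled profile `≻^π`: student `πS s` gets student `s`'s old preference with
schools renamed by `πC`, and school `πC c` gets school `c`'s old preference with students
renamed by `πS`. -/
def relabel {n m : ℕ} (πS : Equiv.Perm (Fin n)) (πC : Equiv.Perm (Fin m))
    (p : Profile n m) : Profile n m :=
  (fun i => πC.symm.trans (p.1 (πS.symm i)),
   fun j => πS.symm.trans (p.2 (πC.symm j)))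

/-- Anonymity of a mechanism. -/
def Anonymous {n m : ℕ} (g : Profile n m → Fin n → Fin m → ℝ) : Prop :=
  ∀ p : Profile n m, ∀ πS : Equiv.Perm (Fin n), ∀ πC : Equiv.Perm (Fin m), ∀ s c,
    g p s c = g (relabel πS πC p) (πS s) (πC c)

/-- The role-swapped profile `≻↔` (students and schools exchange roles). -/
def swapProfile {n : ℕ} (p : Profile n n) : Profile n n := (p.2, p.1)

/-- Symmetry of a mechanism (for balanced markets). -/
def SymmetricMech {n : ℕ} (g : Profile n n → Fin n → Fin n → ℝ) : Prop :=
  ∀ p : Profile n n, ∀ i j, g p i j = g (swapProfile p) j i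

/-- The role-swapped mechanism: apply `f` with the two sides exchanged, then transpose. -/
def swapMech {n : ℕ} (f : Profile n n → Fin n → Fin n → ℝ) : Profile n n → Fin n → Fin n → ℝ :=
  fun p i j => f (swapProfile p) j i

/-- The entrywise average of two matchings. -/
noncomputable def average {n m : ℕ} (r r' : Fin n → Fin m → ℝ) : Fin n → Fin m → ℝ :=
  fun i j => (r i j + r' i j) / 2

lemma isRandMatching_swapMech {n : ℕ} {f : Profile n n → Fin n → Fin n → ℝ}
    (hf : ∀ p, IsRandMatching (f p)) (p : Profile n n) : IsRandMatching (swapMech f p) :=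
  have h := hf (swapProfile p)
  ⟨fun s c => h.1 c s, h.2.2, h.2.1⟩

/-- A student's deviation under `swapMech f` is a school's deviation under `f`, and conversely. -/
lemma twoSidedSP_swapMech {n : ℕ} {f : Profile n n → Fin n → Fin n → ℝ}
    (hf : TwoSidedSP f) : TwoSidedSP (swapMech f) :=
  ⟨fun p => hf.2 (swapProfile p), fun p => hf.1 (swapProfile p)⟩

lemma sum_average_row {n m : ℕ} (r r' : Fin n → Fin m → ℝ) (A : Finset (Fin m)) (s : Fin n) :
    ∑ c ∈ A, average r r' s c = (∑ c ∈ A, r s c + ∑ c ∈ A, r' s c) / 2 := by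
  simp only [average, ← sum_div, sum_add_distrib]

lemma sum_average_col {n m : ℕ} (r r' : Fin n → Fin m → ℝ) (A : Finset (Fin n)) (c : Fin m) :
    ∑ s ∈ A, average r r' s c = (∑ s ∈ A, r s c + ∑ s ∈ A, r' s c) / 2 := by
  simp only [average, ← sum_div, sum_add_distrib]

lemma isRandMatching_average {n m : ℕ} {r r' : Fin n → Fin m → ℝ}
    (h : IsRandMatching r) (h' : IsRandMatching r') : IsRandMatching (average r r') := by
  refine ⟨fun s c => ?_, fun s => ?_, fun c => ?_⟩
  · have h₁ := h.1 s c
    have h₂ := h'.1 s c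
    unfold average
    positivity
  · rw [sum_average_row]
    linarith [h.2.1 s, h'.2.1 s]
  · rw [sum_average_col]
    linarith [h.2.2 c, h'.2.2 c]

lemma twoSidedSP_average {n m : ℕ} {f f' : Profile n m → Fin n → Fin m → ℝ}
    (h : TwoSidedSP f) (h' : TwoSidedSP f') : TwoSidedSP (fun p => average (f p) (f' p)) := by
  refine ⟨fun p s q c => ?_, fun p c q s => ?_⟩
  · simp only [sum_average_row]
    linarith [h.1 p s q c, h'.1 p s q c]
  · simp only [sum_average_col]
    linarith [h.2 p c q s, h'.2 p c q s]

lemma violation_swapProfile {n : ℕ} (p : Profile n n) (r : Fin n → Fin n → ℝ) :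
    violation p (fun i j => r j i) = violation (swapProfile p) r := by
  unfold violation
  rw [sum_comm]
  refine sum_congr rfl fun c _ => sum_congr rfl fun s _ => ?_
  exact congrArg (max · 0) (sub_right_comm _ _ _)

/-- Midpoint convexity of the stability violation in the matching. -/
lemma violation_average_le {n m : ℕ} (p : Profile n m) (r r' : Fin n → Fin m → ℝ) :
    violation p (average r r') ≤ (violation p r + violation p r') / 2 := by
  unfold violation
  simp only [← sum_add_distrib, sum_div]
  refine sum_le_sum fun s _ => sum_le_sum fun c _ => ?_
  rw [sum_average_row, sum_average_col]
  -- The positive part is the larger of an affine function and zero, so each is bounded apart.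
  refine max_le ?_ (by positivity)
  have h₁ := le_max_left (1 - r s c
      - ∑ c' ∈ univ.filter (fun c' => p.1 s c' < p.1 s c), r s c'
      - ∑ s' ∈ univ.filter (fun s' => p.2 c s' < p.2 c s), r s' c) 0
  have h₂ := le_max_left (1 - r' s c
      - ∑ c' ∈ univ.filter (fun c' => p.1 s c' < p.1 s c), r' s c'
      - ∑ s' ∈ univ.filter (fun s' => p.2 c s' < p.2 c s), r' s' c) 0
  simp only [average]
  linarith

/-- Theorem 2 (worst-case): in a balanced market, for any two-sided strategy-proof
randomized matching mechanism `f` there is a two-sided strategy-proof and symmetric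
randomized matching mechanism `g` whose worst-case stability violation is no larger. -/
theorem symmetrization_worst_case (n : ℕ) (f : Profile n n → Fin n → Fin n → ℝ)
    (hf : ∀ p, IsRandMatching (f p)) (hsp : TwoSidedSP f) :
    ∃ g : Profile n n → Fin n → Fin n → ℝ,
      (∀ p, IsRandMatching (g p)) ∧ TwoSidedSP g ∧ SymmetricMech g ∧
      (⨆ p : Profile n n, violation p (g p)) ≤ ⨆ p : Profile n n, violation p (f p) := by
  refine ⟨fun p => average (f p) (swapMech f p),
    fun p => isRandMatching_average (hf p) (isRandMatching_swapMech hf p),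
    twoSidedSP_average hsp (twoSidedSP_swapMech hsp), fun p i j => ?_, ciSup_le fun p => ?_⟩
  · simp only [average, swapMech, swapProfile, add_comm]
  · -- There are finitely many profiles, so the supremum is an upper bound.
    have hbdd : BddAbove (Set.range fun p : Profile n n => violation p (f p)) :=
      (Set.finite_range _).bddAbove
    have h₁ := violation_average_le p (f p) (swapMech f p)
    have h₂ : violation p (swapMech f p) = violation (swapProfile p) (f (swapProfile p)) :=
      violation_swapProfile p _
    have h₃ := le_ciSup hbdd p
    have h₄ := le_ciSup hbdd (swapProfile p)
    linarith
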